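/- Let A be a TGBA over AP' and T a Kripke structure over AP ⊇ AP'. The Self-Loop Aggregation Product A⊠T has an accepting run if and only if the synchronized product A⊗T has an accepting run: Acc(A⊗T) ≠ ∅ ⟺ Acc(A⊠T) ≠ ∅. -/

import Mathlib

open scoped Classical

/-- Boolean formulas over atomic propositions of type `α`. -/
inductive BForm (α : Type) : Type
  | tru : BForm α
  | fls : BForm α
  | var : α → BForm α
  | band : BForm α → BForm α → BForm α
  | bor : BForm α → BForm α → BForm α
  | bnot : BForm α → BForm α

namespace BForm

variable {α : Type}

/-- Evaluation of a Boolean formula under an assignment. -/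
def eval : BForm α → (α → Bool) → Bool
  | tru, _ => true
  | fls, _ => false
  | var a, ρ => ρ a
  | band f g, ρ => f.eval ρ && g.eval ρ
  | bor f g, ρ => f.eval ρ || g.eval ρ
  | bnot f, ρ => !(f.eval ρ)

/-- Free variables (occurring atomic propositions) of a Boolean formula. -/
def FV : BForm α → Set α
  | tru => ∅
  | fls => ∅
  | var a => {a}
  | band f g => f.FV ∪ g.FV
  | bor f g => f.FV ∪ g.FV
  | bnot f => f.FV

/-- Satisfiability of a Boolean formula. -/
def Sat (f : BForm α) : Prop := ∃ ρ : α → Bool, f.eval ρ = true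

/-- The literal describing the value of the assignment `ρ` on the proposition `a`. -/
def lit (ρ : α → Bool) (a : α) : BForm α := if ρ a then var a else bnot (var a)

end BForm

/-- The formula (a conjunction of literals) encoding the restriction of the
assignment `ρ` to the finite set `AP`: the interpretation of an assignment
as a Boolean formula. -/
noncomputable def assignForm {α : Type} (AP : Finset α) (ρ : α → Bool) : BForm α :=
  (AP.toList.map (BForm.lit ρ)).foldr BForm.band BForm.tru

/-- `ρ ≡_E ρ'`: the two assignments agree on all propositions of `E`. -/
def AgreeOn {α : Type} (E : Set α) (ρ ρ' : α → Bool) : Prop := ∀ a ∈ E, ρ a = ρ' a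

/-- Restriction of an assignment to the set `E` (`false` outside of `E`). -/
noncomputable def restrS {α : Type} (E : Set α) (ρ : α → Bool) : α → Bool :=
  fun p => if p ∈ E then ρ p else false

/-- A Transition-based Generalized Büchi Automaton over atomic propositions
drawn from `α`, with alphabet `AP`, state set `Q`, acceptance conditions `F`,
transition relation `δ ⊆ Q × B(AP) × 2^F × Q` and initial state `init`. -/
structure TGBA (α : Type) where
  AP : Finset α
  Q : Type
  F : Type
  init : Q
  δ : Set (Q × BForm α × Set F × Q)

/-- A Kripke structure over atomic propositions drawn from `α`, with alphabet
`AP`, states `S` labeled by assignments via `lab`, transition relation `Δ`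
and initial state `init`. -/
structure Kripke (α : Type) where
  AP : Finset α
  S : Type
  lab : S → α → Bool
  Δ : Set (S × S)
  init : S

namespace TGBA

variable {α : Type}

/-- Well-formedness: every transition label is a satisfiable formula over `AP`. -/
def WF (A : TGBA α) : Prop := ∀ t ∈ A.δ, (t.2.1).FV ⊆ ↑A.AP ∧ (t.2.1).Sat

/-- A run: an infinite sequence of consecutive transitions starting at the
initial state. -/
def IsRun (A : TGBA α) (π : ℕ → A.Q × BForm α × Set A.F × A.Q) : Prop :=
  (π 0).1 = A.init ∧ ∀ i, π i ∈ A.δ ∧ (π i).2.2.2 = (π (i + 1)).1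

/-- An accepting run: a run visiting every acceptance condition infinitely often. -/
def IsAccRun (A : TGBA α) (π : ℕ → A.Q × BForm α × Set A.F × A.Q) : Prop :=
  A.IsRun π ∧ ∀ c : A.F, ∀ i : ℕ, ∃ j, i ≤ j ∧ c ∈ (π j).2.2.1

/-- `Acc(A) ≠ ∅`: the automaton has an accepting run. -/
def HasAccRun (A : TGBA α) : Prop := ∃ π, A.IsAccRun π

/-- The language of the TGBA: the infinite words compatible with some accepting run. -/
def Lang (A : TGBA α) : Set (ℕ → α → Bool) :=
  {w | ∃ π, A.IsAccRun π ∧ ∀ i, ((π i).2.1).eval (w i) = true}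

/-- One-step successor relation between automaton states. -/
def Step (A : TGBA α) (q q' : A.Q) : Prop := ∃ f ac, (q, f, ac, q') ∈ A.δ

/-- Reachability between automaton states. -/
def Reach (A : TGBA α) : A.Q → A.Q → Prop := Relation.ReflTransGen A.Step

/-- `FV(q)`: the union of the free variables of the labels of all transitions
reachable from `q`. -/
def FVq (A : TGBA α) (q : A.Q) : Set α :=
  {p | ∃ t ∈ A.δ, A.Reach q t.1 ∧ p ∈ (t.2.1).FV}

/-- There is some transition between the two states. -/
def HasTrans (A : TGBA α) (p₁ p₂ : A.Q) : Prop := ∃ f ac, (p₁, f, ac, p₂) ∈ A.δ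

/-- There is a transition with acceptance set `ac` between the two states. -/
def HasTransAc (A : TGBA α) (p₁ : A.Q) (ac : Set A.F) (p₂ : A.Q) : Prop :=
  ∃ f, (p₁, f, ac, p₂) ∈ A.δ

end TGBA

/-- Prepend a finite word to an infinite word. -/
def appendω {β : Type} (u : List β) (v : ℕ → β) : ℕ → β := fun n =>
  if h : n < u.length then u.get ⟨n, h⟩ else v (n - u.length)

/-- A language of infinite words is stuttering-invariant. -/
def StutterInvariantLang {β : Type} (L : Set (ℕ → β)) : Prop :=
  ∀ (u : List β) (ρ : β) (v : ℕ → β), appendω (u ++ [ρ]) v ∈ L ↔ appendω (u ++ [ρ, ρ]) v ∈ L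

/-- A TGBA is stuttering-invariant iff its language is. -/
def TGBA.StutterInvariant {α : Type} (A : TGBA α) : Prop := StutterInvariantLang A.Lang

/-- Two infinite words are stuttering equivalent: they are equal after collapsing
consecutive repeated letters, as witnessed by matching block decompositions. -/
def StutterEquiv {β : Type} (w w' : ℕ → β) : Prop :=
  ∃ ι κ : ℕ → ℕ, ι 0 = 0 ∧ κ 0 = 0 ∧ StrictMono ι ∧ StrictMono κ ∧
    ∀ k i j, ι k ≤ i → i < ι (k + 1) → κ k ≤ j → j < κ (k + 1) → w i = w' j

/-- Two languages are stuttering equivalent: every word of either language is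
stuttering equivalent to some word of the other. -/
def LangStutterEquiv {β : Type} (L L' : Set (ℕ → β)) : Prop :=
  (∀ w ∈ L, ∃ w' ∈ L', StutterEquiv w w') ∧ ∀ w' ∈ L', ∃ w ∈ L, StutterEquiv w w'

namespace Kripke

variable {α : Type}

/-- `SuccF(a, P)`: successors of states of `a`, filtered to keep only those
whose label satisfies `P`. -/
def SuccF (T : Kripke α) (a : Set T.S) (P : (α → Bool) → Prop) : Set T.S :=
  {s' | ∃ s ∈ a, (s, s') ∈ T.Δ ∧ P (T.lab s')}

/-- `ReachF(a, P)`: the least superset of `a` closed under `SuccF(·, P)`. -/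
def ReachF (T : Kripke α) (a : Set T.S) (P : (α → Bool) → Prop) : Set T.S :=
  ⋂₀ {b | a ⊆ b ∧ T.SuccF b P ⊆ b}

/-- `FSucc(a, P)`: successors of the states of `a` whose label satisfies `P`. -/
def FSucc (T : Kripke α) (a : Set T.S) (P : (α → Bool) → Prop) : Set T.S :=
  {s' | ∃ s ∈ a, (s, s') ∈ T.Δ ∧ P (T.lab s)}

/-- `FReach(a, P)`: the least superset of `a` closed under `FSucc(·, P)`. -/
def FReach (T : Kripke α) (a : Set T.S) (P : (α → Bool) → Prop) : Set T.S :=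
  ⋂₀ {b | a ⊆ b ∧ T.FSucc b P ⊆ b}

/-- The label of (a representative state of) an aggregate. -/
noncomputable def aggLab (T : Kripke α) (a : Set T.S) : α → Bool :=
  if h : a.Nonempty then T.lab h.some else fun _ => false

/-- Homogeneity of a set of states w.r.t. the observed propositions `E`. -/
def Homog (T : Kripke α) (E : Set α) (a : Set T.S) : Prop :=
  ∀ s ∈ a, ∀ s' ∈ a, AgreeOn E (T.lab s) (T.lab s')

/-- `a` is a (nonempty, homogeneous, saturated) aggregate w.r.t. `E`. -/
def IsAgg (T : Kripke α) (E : Set α) (a : Set T.S) : Prop :=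
  a.Nonempty ∧ T.Homog E a ∧ a = T.ReachF a fun ρ => AgreeOn E ρ (T.aggLab a)

/-- `a` contains a cycle of `Δ`. -/
def HasCycle (T : Kripke α) (a : Set T.S) : Prop :=
  ∃ s ∈ a, Relation.TransGen (fun x y => x ∈ a ∧ y ∈ a ∧ (x, y) ∈ T.Δ) s s

end Kripke

/-- Transition relation of the synchronized product `A ⊗ T`. -/
def synchδ {α : Type} (A : TGBA α) (T : Kripke α) :
    Set ((A.Q × T.S) × BForm α × Set A.F × (A.Q × T.S)) :=
  {t | ∃ (q₁ q₂ : A.Q) (s₁ s₂ : T.S) (ac : Set A.F),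
    t = ((q₁, s₁), assignForm T.AP (T.lab s₁), ac, (q₂, s₂)) ∧ (s₁, s₂) ∈ T.Δ ∧
    ∃ g : BForm α, (q₁, g, ac, q₂) ∈ A.δ ∧ g.eval (T.lab s₁) = true}

/-- The synchronized product `A ⊗ T` of a TGBA and a Kripke structure. -/
def synchProd {α : Type} (A : TGBA α) (T : Kripke α) : TGBA α where
  AP := T.AP
  Q := A.Q × T.S
  F := A.F
  init := (A.init, T.init)
  δ := synchδ A T

/-- The stuttering synchronized product `A ⊗̃ T`: the synchronized product
together with the extra stuttering transitions. -/
def stutProd {α : Type} (A : TGBA α) (T : Kripke α) : TGBA α where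
  AP := T.AP
  Q := A.Q × T.S
  F := A.F
  init := (A.init, T.init)
  δ := synchδ A T ∪
    {t | ∃ q₁ s₁ s₂,
      t = ((q₁, s₁), assignForm T.AP (T.lab s₁), (∅ : Set A.F), (q₁, s₂)) ∧
      (s₁, s₂) ∈ T.Δ ∧ AgreeOn (A.FVq q₁) (T.lab s₁) (T.lab s₂)}

/-- The Symbolic Observation Graph of `T` over the observed propositions `E`:
a Kripke structure whose states are aggregates (`Sum.inl`) and divergent
states (`Sum.inr`, assignments over `E`). -/
noncomputable def SOG {α : Type} (T : Kripke α) (E : Finset α) : Kripke α where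
  AP := E
  S := Set T.S ⊕ ({x // x ∈ E} → Bool)
  lab := fun x =>
    match x with
    | Sum.inl a => restrS ↑E (T.aggLab a)
    | Sum.inr l => fun p => if h : p ∈ E then l ⟨p, h⟩ else false
  Δ := {pr |
    (∃ a a' : Set T.S, pr = (Sum.inl a, Sum.inl a') ∧ T.IsAgg ↑E a ∧ T.IsAgg ↑E a' ∧
      a' = T.ReachF (T.SuccF a (fun ρ => AgreeOn ↑E ρ (T.aggLab a')) \ a)
          fun ρ => AgreeOn ↑E ρ (T.aggLab a')) ∨
    (∃ (a : Set T.S) (l : {x // x ∈ E} → Bool), pr = (Sum.inl a, Sum.inr l) ∧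
      T.IsAgg ↑E a ∧ T.HasCycle a ∧ ∀ p : {x // x ∈ E}, l p = T.aggLab a ↑p) ∨
    ∃ l : {x // x ∈ E} → Bool, pr = (Sum.inr l, Sum.inr l)}
  init := Sum.inl (T.ReachF {T.init} fun ρ => AgreeOn ↑E ρ (T.lab T.init))

/-- The finite set of propositions of `AP` observable from `q`. -/
noncomputable def fvFinset {α : Type} (A : TGBA α) (q : A.Q) : Finset α :=
  A.AP.filter fun p => p ∈ A.FVq q

/-- The Symbolic Observation Product `A ▷ T`: a TGBA whose states pair a state of
`A` with either an aggregate (`Sum.inl`) or a divergent state (`Sum.inr`, an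
assignment over `FV(q)`, canonically `false` outside `FV(q)`). -/
noncomputable def SOP {α : Type} (A : TGBA α) (T : Kripke α) : TGBA α where
  AP := A.AP
  Q := A.Q × (Set T.S ⊕ (α → Bool))
  F := A.F
  init := (A.init,
    Sum.inl (T.ReachF {T.init} fun ρ => AgreeOn (A.FVq A.init) ρ (T.lab T.init)))
  δ := {t |
    -- aggregate to aggregate
    (∃ (q₁ q₂ : A.Q) (a₁ a₂ : Set T.S) (ac : Set A.F),
      t = ((q₁, Sum.inl a₁), assignForm (fvFinset A q₁) (T.aggLab a₁), ac,
           (q₂, Sum.inl a₂)) ∧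
      T.IsAgg (A.FVq q₁) a₁ ∧ T.IsAgg (A.FVq q₂) a₂ ∧
      (∃ f : BForm α, (q₁, f, ac, q₂) ∈ A.δ ∧
        f.eval (restrS (A.FVq q₁) (T.aggLab a₁)) = true) ∧
      ∃ l' : α → Bool,
        a₂ = T.ReachF (T.SuccF a₁ (fun ρ => AgreeOn (A.FVq q₂) ρ l') \ a₁)
            fun ρ => AgreeOn (A.FVq q₂) ρ l') ∨
    -- aggregate to divergent
    (∃ (q₁ q₂ : A.Q) (a : Set T.S) (l₂ : α → Bool) (ac : Set A.F),
      t = ((q₁, Sum.inl a), assignForm (fvFinset A q₁) (T.aggLab a), ac,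
           (q₂, Sum.inr l₂)) ∧
      T.IsAgg (A.FVq q₁) a ∧ T.HasCycle a ∧
      l₂ = restrS (A.FVq q₂) (T.aggLab a) ∧
      ∃ f : BForm α, (q₁, f, ac, q₂) ∈ A.δ ∧
        f.eval (restrS (A.FVq q₁) (T.aggLab a)) = true) ∨
    -- divergent to divergent
    ∃ (q₁ q₂ : A.Q) (l₁ l₂ : α → Bool) (ac : Set A.F),
      t = ((q₁, Sum.inr l₁), assignForm (fvFinset A q₁) l₁, ac, (q₂, Sum.inr l₂)) ∧
      l₁ = restrS (A.FVq q₁) l₁ ∧ l₂ = restrS (A.FVq q₂) l₁ ∧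
      ∃ f : BForm α, (q₁, f, ac, q₂) ∈ A.δ ∧ f.eval l₁ = true}

/-- `SF(q, ac)` as a predicate on assignments: `ρ` satisfies the disjunction of
the labels of the self-loops on `q` whose acceptance sets are included in `ac`. -/
def SFpred {α : Type} (A : TGBA α) (q : A.Q) (ac : Set A.F) : (α → Bool) → Prop :=
  fun ρ => ∃ (f : BForm α) (ac' : Set A.F), (q, f, ac', q) ∈ A.δ ∧ ac' ⊆ ac ∧ f.eval ρ = true

/-- The Self-Loop Aggregation Product `A ⊠ T`. -/
def SLAP {α : Type} (A : TGBA α) (T : Kripke α) : TGBA α where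
  AP := ∅
  Q := A.Q × Set T.S
  F := A.F
  init := (A.init, T.FReach {T.init} (SFpred A A.init ∅))
  δ := {t | ∃ (q₁ q₂ : A.Q) (a₁ a₂ : Set T.S) (ac : Set A.F),
    t = ((q₁, a₁), BForm.tru, ac, (q₂, a₂)) ∧ a₁.Nonempty ∧ a₂.Nonempty ∧
    ∃ f : BForm α, (q₁, f, ac, q₂) ∈ A.δ ∧ (q₁ = q₂ → ac ≠ ∅) ∧
      a₂ = T.FReach (T.FSucc a₁ fun ρ => f.eval ρ = true) (SFpred A q₂ ac)}

/-- Labelled step of the synchronized product. -/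
def SynStep {α : Type} (A : TGBA α) (T : Kripke α) (x : A.Q × T.S) (ac : Set A.F)
    (y : A.Q × T.S) : Prop :=
  (x.2, y.2) ∈ T.Δ ∧ ∃ g : BForm α, (x.1, g, ac, y.1) ∈ A.δ ∧ g.eval (T.lab x.2) = true

theorem synch_iff {α : Type} (A : TGBA α) (T : Kripke α) :
    (synchProd A T).HasAccRun ↔ ∃ (x : ℕ → A.Q × T.S) (ac : ℕ → Set A.F),
      x 0 = (A.init, T.init) ∧ (∀ i, SynStep A T (x i) (ac i) (x (i + 1))) ∧
      ∀ c : A.F, ∀ i : ℕ, ∃ j, i ≤ j ∧ c ∈ ac j := by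
  constructor
  · rintro ⟨π, ⟨h0, hs⟩, hacc⟩
    refine ⟨fun i => (π i).1, fun i => (π i).2.2.1, h0, fun i => ?_, hacc⟩
    obtain ⟨⟨q₁, q₂, s₁, s₂, ac, he, hd, hg⟩, hn⟩ := hs i
    show SynStep A T (π i).1 (π i).2.2.1 (π (i + 1)).1
    rw [← hn, he]
    exact ⟨hd, hg⟩
  · rintro ⟨x, ac, h0, hs, hacc⟩
    refine ⟨fun i => (x i, assignForm T.AP (T.lab (x i).2), ac i, x (i + 1)),
      ⟨h0, fun i => ⟨?_, rfl⟩⟩, hacc⟩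
    exact ⟨(x i).1, (x (i + 1)).1, (x i).2, (x (i + 1)).2, ac i, rfl, (hs i).1, (hs i).2⟩

theorem subset_FReach {α : Type} (T : Kripke α) (a : Set T.S) (P : (α → Bool) → Prop) :
    a ⊆ T.FReach a P := fun _ hs _ hb => hb.1 hs

theorem FReach_closed {α : Type} (T : Kripke α) (a : Set T.S) (P : (α → Bool) → Prop)
    {s s' : T.S} (hs : s ∈ T.FReach a P) (hd : (s, s') ∈ T.Δ) (hP : P (T.lab s)) :
    s' ∈ T.FReach a P := fun b hb => hb.2 ⟨s, hs b hb, hd, hP⟩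

/-- Paths of given length. -/
def PathN {X L : Type} (St : X → L → X → Prop) : ℕ → X → X → Prop
  | 0, x, y => x = y
  | n + 1, x, y => ∃ z ac, St x ac z ∧ PathN St n z y

theorem PathN.snoc {X L : Type} {St : X → L → X → Prop} {n : ℕ} {x y z : X} {l : L}
    (h : PathN St n x y) (hs : St y l z) : PathN St (n + 1) x z := by
  induction n generalizing x with
  | zero => cases h; exact ⟨z, l, hs, rfl⟩
  | succ n ih =>
    obtain ⟨w, m, h1, h2⟩ := h
    exact ⟨w, m, h1, ih h2⟩

theorem FReach_path {α : Type} (A : TGBA α) (T : Kripke α) (a : Set T.S) (q : A.Q)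
    (ac : Set A.F) {s : T.S} (hs : s ∈ T.FReach a (SFpred A q ac)) :
    ∃ s₀ ∈ a, ∃ n, PathN (SynStep A T) n (q, s₀) (q, s) := by
  refine hs {s | ∃ s₀ ∈ a, ∃ n, PathN (SynStep A T) n (q, s₀) (q, s)} ⟨?_, ?_⟩
  · intro s h
    exact ⟨s, h, 0, rfl⟩
  · rintro s' ⟨s, ⟨s₀, h0, n, hp⟩, hd, f, ac', hδ, -, hf⟩
    exact ⟨s₀, h0, n + 1, hp.snoc (l := ac') ⟨hd, f, hδ, hf⟩⟩

/-- Concatenation of infinitely many finite paths. -/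
theorem concat {X L : Type} (St : X → L → X → Prop) (x₀ : X) (x : ℕ → X) (l : ℕ → L)
    (h0 : ∃ n, PathN St n x₀ (x 0))
    (h : ∀ i, ∃ y, St (x i) (l i) y ∧ ∃ n, PathN St n y (x (i + 1))) :
    ∃ (y : ℕ → X) (m : ℕ → L), y 0 = x₀ ∧ (∀ i, St (y i) (m i) (y (i + 1))) ∧
      ∀ i, ∃ j, i ≤ j ∧ m j = l i := by
  let C := {c : ℕ × X × ℕ // PathN St c.2.2 c.2.1 (x c.1)}
  have key : ∀ c : C, ∃ (c' : C) (m : L), St c.1.2.1 m c'.1.2.1 ∧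
      (c.1.2.2 = 0 → m = l c.1.1 ∧ c'.1.1 = c.1.1 + 1) ∧
      (∀ n, c.1.2.2 = n + 1 → c'.1.1 = c.1.1 ∧ c'.1.2.2 = n) := by
    rintro ⟨⟨i, y, n⟩, hp⟩
    cases n with
    | zero =>
      obtain ⟨z, hz, n, hn⟩ := h i
      have hp' : y = x i := hp
      subst hp'
      exact ⟨⟨(i + 1, z, n), hn⟩, l i, hz, fun _ => ⟨rfl, rfl⟩, fun n h => by simp at h⟩
    | succ n =>
      obtain ⟨z, m, hz, hn⟩ := hp
      refine ⟨⟨(i, z, n), hn⟩, m, hz, fun h => by simp at h, fun n' h => ⟨rfl, ?_⟩⟩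
      simpa using h
  choose nx lab hst hz hsucc using key
  obtain ⟨n0, hn0⟩ := h0
  let c : ℕ → C := fun k => nx^[k] ⟨(0, x₀, n0), hn0⟩
  have hc : ∀ k, c (k + 1) = nx (c k) := fun k => Function.iterate_succ_apply' _ _ _
  have hfin : ∀ n k, (c k).1.2.2 = n → ∃ k', k ≤ k' ∧ (c k').1.1 = (c k).1.1 ∧
      (c k').1.2.2 = 0 := by
    intro n
    induction n with
    | zero => intro k hk; exact ⟨k, le_rfl, rfl, hk⟩
    | succ n ih =>
      intro k hk
      obtain ⟨h1, h2⟩ := hsucc (c k) n hk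
      rw [← hc] at h1 h2
      obtain ⟨k', a1, a2, a3⟩ := ih (k + 1) h2
      exact ⟨k', by omega, a2.trans h1, a3⟩
  have hall : ∀ i, ∃ j, i ≤ j ∧ (c j).1.1 = i ∧ (c j).1.2.2 = 0 := by
    intro i
    induction i with
    | zero =>
      obtain ⟨k', -, a2, a3⟩ := hfin _ 0 rfl
      exact ⟨k', Nat.zero_le _, a2, a3⟩
    | succ i ih =>
      obtain ⟨j, h1, h2, h3⟩ := ih
      have h4 := (hz (c j) h3).2
      rw [← hc] at h4
      obtain ⟨k', a1, a2, a3⟩ := hfin _ (j + 1) rfl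
      exact ⟨k', by omega, by omega, a3⟩
  refine ⟨fun k => (c k).1.2.1, fun k => lab (c k), rfl, fun k => ?_, fun i => ?_⟩
  · show St (c k).1.2.1 (lab (c k)) (c (k + 1)).1.2.1
    rw [hc]; exact hst _
  · obtain ⟨j, h1, h2, h3⟩ := hall i
    exact ⟨j, h1, (hz _ h3).1.trans (by rw [h2])⟩

/-- Backward iteration of predecessor functions. -/
def backIter {S : Type} (p : ℕ → S → S) (i : ℕ) : ℕ → S → S
  | 0, s => s
  | n + 1, s => backIter p i n (p (i + n) s)

theorem backIter_succ {S : Type} (p : ℕ → S → S) (i n : ℕ) (s : S) :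
    backIter p i (n + 1) s = p i (backIter p (i + 1) n s) := by
  induction n generalizing s with
  | zero => rfl
  | succ n ih =>
    show backIter p i (n + 1) (p (i + (n + 1)) s) = p i (backIter p (i + 1) n (p (i + 1 + n) s))
    rw [ih, show i + (n + 1) = i + 1 + n by omega]

theorem konig {S : Type} [Finite S] (a : ℕ → Set S) (hne : ∀ i, (a i).Nonempty)
    (R : ℕ → S → S → Prop) (h : ∀ i, ∀ s' ∈ a (i + 1), ∃ s ∈ a i, R i s s') :
    ∃ s : ℕ → S, ∀ i, s i ∈ a i ∧ R i (s i) (s (i + 1)) := by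
  have h' : ∀ i s', ∃ s, s' ∈ a (i + 1) → s ∈ a i ∧ R i s s' := by
    intro i s'
    by_cases hs : s' ∈ a (i + 1)
    · obtain ⟨s, h1, h2⟩ := h i s' hs
      exact ⟨s, fun _ => ⟨h1, h2⟩⟩
    · exact ⟨s', fun h => absurd h hs⟩
  choose p hp using h'
  let Good : ℕ → S → Prop := fun i s => ∀ n, ∃ s' ∈ a (i + n), backIter p i n s' = s
  have hdown : ∀ i s n m, m ≤ n → (∃ s' ∈ a (i + n), backIter p i n s' = s) →
      ∃ s' ∈ a (i + m), backIter p i m s' = s := by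
    intro i s n m hmn
    induction n, hmn using Nat.le_induction with
    | base => exact id
    | succ n _ ih =>
      rintro ⟨s', h1, h2⟩
      exact ih ⟨_, (hp (i + n) s' h1).1, h2⟩
  -- pigeonhole
  have pig : ∀ i (P : S → Prop),
      (∀ n, ∃ s' ∈ a (i + n), P (backIter p i n s')) → ∃ t, P t ∧ Good i t := by
    intro i P hP
    choose s' hs' hPs using hP
    obtain ⟨t, ht⟩ := Finite.exists_infinite_fiber (fun n => backIter p i n (s' n))
    have ht' := Set.infinite_coe_iff.mp ht
    refine ⟨t, ?_, fun n => ?_⟩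
    · obtain ⟨n, hn⟩ := ht'.nonempty
      have hn' : backIter p i n (s' n) = t := hn
      exact hn' ▸ hPs n
    · obtain ⟨m, hm, hnm⟩ := ht'.exists_gt n
      exact hdown i t m n hnm.le ⟨s' m, hs' m, hm⟩
  obtain ⟨t0, -, ht0⟩ := pig 0 (fun _ => True) fun n => by
    obtain ⟨s, hs⟩ := hne (0 + n); exact ⟨s, hs, trivial⟩
  have next : ∀ i t, ∃ t', Good i t → p i t' = t ∧ Good (i + 1) t' := by
    intro i t
    by_cases hg : Good i t
    · obtain ⟨t', h1, h2⟩ := pig (i + 1) (fun t' => p i t' = t) fun n => by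
        obtain ⟨s', h1, h2⟩ := hg (n + 1)
        rw [backIter_succ] at h2
        exact ⟨s', by rwa [show i + 1 + n = i + (n + 1) by omega], h2⟩
      exact ⟨t', fun _ => ⟨h1, h2⟩⟩
    · exact ⟨t, fun h => absurd h hg⟩
  choose nx hnx using next
  let s : ℕ → S := fun n => Nat.rec t0 (fun i t => nx i t) n
  have hgood : ∀ i, Good i (s i) := by
    intro i
    induction i with
    | zero => exact ht0
    | succ i ih => exact (hnx i _ ih).2
  have hmem : ∀ i, s i ∈ a i := by
    intro i
    obtain ⟨s', h1, h2⟩ := hgood i 0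
    have h2' : s' = s i := h2
    exact h2' ▸ h1
  refine ⟨s, fun i => ⟨hmem i, ?_⟩⟩
  have h1 : p i (s (i + 1)) = s i := (hnx i _ (hgood i)).1
  have h2 := (hp i (s (i + 1)) (hmem _)).2
  rwa [h1] at h2

theorem slap_to_synch {α : Type} (A : TGBA α) (T : Kripke α) [Finite T.S]
    (h : (SLAP A T).HasAccRun) : (synchProd A T).HasAccRun := by
  rw [synch_iff]
  obtain ⟨π, ⟨h0, hs⟩, hacc⟩ := h
  let y : ℕ → A.Q × Set T.S := fun i => (π i).1
  let l : ℕ → Set A.F := fun i => (π i).2.2.1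
  have hy0 : y 0 = (A.init, T.FReach {T.init} (SFpred A A.init ∅)) := h0
  have hst : ∀ i, (y i).2.Nonempty ∧ ∃ f : BForm α, ((y i).1, f, l i, (y (i + 1)).1) ∈ A.δ ∧
      (y (i + 1)).2 = T.FReach (T.FSucc (y i).2 fun ρ => f.eval ρ = true)
        (SFpred A (y (i + 1)).1 (l i)) := by
    intro i
    obtain ⟨⟨q₁, q₂, a₁, a₂, ac, he, hn1, hn2, f, hf, -, ha⟩, hn⟩ := hs i
    have e1 : y i = (q₁, a₁) := by show (π i).1 = _; rw [he]
    have e2 : l i = ac := by show (π i).2.2.1 = _; rw [he]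
    have e3 : y (i + 1) = (q₂, a₂) := by show (π (i + 1)).1 = _; rw [← hn, he]
    rw [e1, e2, e3]
    exact ⟨hn1, f, hf, ha⟩
  obtain ⟨s, hs'⟩ := konig (fun i => (y i).2) (fun i => (hst i).1)
    (fun i s s' => ∃ z, SynStep A T ((y i).1, s) (l i) z ∧
      ∃ n, PathN (SynStep A T) n z ((y (i + 1)).1, s')) (by
    intro i s' hs'
    obtain ⟨-, f, hf, ha⟩ := hst i
    have hs'' : s' ∈ (y (i + 1)).2 := hs'
    rw [ha] at hs''
    obtain ⟨s₀, ⟨s, hsa, hd, he⟩, n, hp⟩ := FReach_path A T _ _ _ hs''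
    exact ⟨s, hsa, _, ⟨hd, f, hf, he⟩, n, hp⟩)
  obtain ⟨x, m, hx0, hx, hm⟩ := concat (SynStep A T) (A.init, T.init)
    (fun i => ((y i).1, s i)) l (by
      have h1 := (hs' 0).1
      simp only [hy0] at h1 ⊢
      obtain ⟨s₀, hs₀, hp⟩ := FReach_path A T _ _ _ h1
      rw [Set.mem_singleton_iff] at hs₀
      rwa [hs₀] at hp) (fun i => (hs' i).2)
  refine ⟨x, m, hx0, hx, fun c i => ?_⟩
  obtain ⟨j, hj, hc⟩ := hacc c i
  obtain ⟨k, hk, hmk⟩ := hm j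
  exact ⟨k, hj.trans hk, by rw [hmk]; exact hc⟩

theorem synch_to_slap {α : Type} (A : TGBA α) (T : Kripke α) [Nonempty A.F]
    (h : (synchProd A T).HasAccRun) : (SLAP A T).HasAccRun := by
  rw [synch_iff] at h
  obtain ⟨x, ac, h0, hs, hacc⟩ := h
  choose hd f hf he using hs
  let N : ℕ → Prop := fun i => ¬ ((x i).1 = (x (i + 1)).1 ∧ ac i = ∅)
  let b : ℕ → Set T.S := fun n => Nat.rec (T.FReach {T.init} (SFpred A A.init ∅))
    (fun i bi => if N i then T.FReach (T.FSucc bi fun ρ => (f i).eval ρ = true)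
      (SFpred A (x (i + 1)).1 (ac i)) else bi) n
  have hbN : ∀ i, N i → b (i + 1) = T.FReach (T.FSucc (b i) fun ρ => (f i).eval ρ = true)
      (SFpred A (x (i + 1)).1 (ac i)) := fun i hi => if_pos hi
  have hbS : ∀ i, ¬ N i → b (i + 1) = b i := fun i hi => if_neg hi
  have hqS : ∀ i, ¬ N i → (x (i + 1)).1 = (x i).1 := fun i hi => (not_not.mp hi).1.symm
  have hinv : ∀ i, (x i).2 ∈ b i ∧ ∃ a c, b i = T.FReach a (SFpred A (x i).1 c) := by
    intro i
    induction i with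
    | zero =>
      refine ⟨?_, {T.init}, ∅, by rw [h0]; rfl⟩
      rw [h0]
      exact subset_FReach _ _ _ rfl
    | succ i ih =>
      obtain ⟨h1, a, c, hb⟩ := ih
      by_cases hi : N i
      · rw [hbN i hi]
        exact ⟨subset_FReach _ _ _ ⟨_, h1, hd i, he i⟩, _, _, rfl⟩
      · rw [hbS i hi, hqS i hi]
        refine ⟨?_, a, c, hb⟩
        rw [hb] at h1 ⊢
        refine FReach_closed _ _ _ h1 (hd i) ⟨f i, ac i, ?_, ?_, he i⟩
        · have := hf i
          rwa [hqS i hi] at this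
        · rw [(not_not.mp hi).2]; exact Set.empty_subset _
  have hNac : ∀ i c, c ∈ ac i → N i := by
    rintro i c hc ⟨-, h⟩
    rw [h] at hc
    exact hc
  have hinf : {i | N i}.Infinite := by
    obtain ⟨c⟩ := (inferInstance : Nonempty A.F)
    refine Set.infinite_of_forall_exists_gt fun n => ?_
    obtain ⟨j, hj, hc⟩ := hacc c (n + 1)
    exact ⟨j, hNac j c hc, hj⟩
  let y : ℕ → A.Q × Set T.S := fun i => ((x i).1, b i)
  have hconst : ∀ i j, i ≤ j → (∀ k, i ≤ k → k < j → ¬ N k) → y j = y i := by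
    intro i j hij
    induction j, hij using Nat.le_induction with
    | base => intro _; rfl
    | succ j hj ih =>
      intro hk
      rw [← ih fun k h1 h2 => hk k h1 (by omega)]
      have := hk j hj (by omega)
      exact Prod.ext (hqS j this) (hbS j this)
  let ν := Nat.nth N
  have hν : ∀ k, N (ν k) := fun k => Nat.nth_mem_of_infinite hinf k
  have hmono : StrictMono ν := Nat.nth_strictMono hinf
  refine ⟨fun k => (y (ν k), BForm.tru, ac (ν k), y (ν k + 1)), ⟨?_, fun k => ⟨?_, ?_⟩⟩, ?_⟩
  · have h1 : y (ν 0) = y 0 := hconst 0 (ν 0) (Nat.zero_le _) fun k _ hk hN => by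
      have := Nat.nth_count hN
      have h2 : ν 0 ≤ k := this ▸ hmono.monotone (Nat.zero_le _)
      omega
    show y (ν 0) = _
    rw [h1]
    show ((x 0).1, b 0) = _
    rw [h0]
    rfl
  · refine ⟨_, _, _, _, _, rfl, ⟨_, (hinv (ν k)).1⟩,
      ⟨_, (hinv (ν k + 1)).1⟩, f (ν k), hf _, ?_, hbN _ (hν k)⟩
    intro h1 h2
    exact hν k ⟨h1, h2⟩
  · refine (hconst (ν k + 1) (ν (k + 1)) (hmono (Nat.lt_succ_self k)) fun m h1 h2 hN => ?_).symm
    have hm : ν (Nat.count N m) = m := Nat.nth_count hN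
    rw [← hm] at h1 h2
    have h3 := hmono.lt_iff_lt.mp h2
    have h4 := hmono.lt_iff_lt.mp (Nat.lt_of_succ_le h1)
    omega
  · intro c i
    obtain ⟨j, hj, hc⟩ := hacc c (ν i)
    have hm : ν (Nat.count N j) = j := Nat.nth_count (hNac j c hc)
    refine ⟨Nat.count N j, ?_, ?_⟩
    · rw [← hm] at hj
      exact hmono.le_iff_le.mp hj
    · show c ∈ ac (ν (Nat.count N j))
      rw [hm]; exact hc

/-- The Self-Loop Aggregation Product `A ⊠ T` has an accepting
run if and only if the synchronized product `A ⊗ T` does: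
`Acc(A ⊗ T) ≠ ∅ ⟺ Acc(A ⊠ T) ≠ ∅`. -/
theorem stmt14 {α : Type} (A : TGBA α) (T : Kripke α)
    [Finite A.Q] [Finite A.F] [Nonempty A.F] [Finite T.S]
    (hwf : A.WF) (hAP : A.AP ⊆ T.AP) :
    (synchProd A T).HasAccRun ↔ (SLAP A T).HasAccRun :=
  ⟨synch_to_slap A T, slap_to_synch A T⟩
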